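/- arXiv:1301.2361 — 11 statements merged into one kernel-verified Lean document; each statement's English description precedes it below -/
import Mathlib

section
/- For every integer m ≥ 0, the polynomials f_m and g_m have the closed formulas f_m(s) = Σ_{i=0}^{m} C(m+i, m-i) s^i and g_m(s) = Σ_{i=0}^{m} C(m+1+i, m-i) s^i, where C(a,b) denotes the binomial coefficient. In particular, for m ≥ 0 all coefficients of f_m and g_m are positive integers, f_m and g_m have degree m, and both are monic. -/
open Polynomial Finset

/-- The polynomial `f_m ∈ ℤ[s]` for `m ≥ 0`: `f_0 = 1`, `f_1 = s+1`,
`f_{m+2} = (s+2) f_{m+1} - f_m`. -/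
noncomputable def fP : ℕ → Polynomial ℤ
  | 0 => 1
  | 1 => X + 1
  | n + 2 => (X + 2) * fP (n + 1) - fP n

/-- The polynomial `g_m ∈ ℤ[s]` for `m ≥ 0`: `g_0 = 1`, `g_1 = s+2`,
`g_{m+2} = (s+2) g_{m+1} - g_m`. -/
noncomputable def gP : ℕ → Polynomial ℤ
  | 0 => 1
  | 1 => X + 2
  | n + 2 => (X + 2) * gP (n + 1) - gP n

theorem fg_step (m : ℕ) : fP (m + 1) = X * gP m + fP m ∧ gP (m + 1) = fP (m + 1) + gP m := by
  induction m with
  | zero => simp only [fP, gP]; constructor <;> ring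
  | succ n ih =>
    obtain ⟨h1, h2⟩ := ih
    have hf : fP (n + 1 + 1) = (X + 2) * fP (n + 1) - fP n := by rw [fP]
    have hg : gP (n + 1 + 1) = (X + 2) * gP (n + 1) - gP n := by rw [gP]
    constructor
    · rw [hf]; linear_combination h1 - X * h2
    · rw [hg, hf]; linear_combination (X + 1) * h2 - h1

theorem fg_coeff (m : ℕ) : ∀ i : ℕ, (fP m).coeff i = ((m + i).choose (2 * i) : ℤ) ∧
    (gP m).coeff i = ((m + 1 + i).choose (2 * i + 1) : ℤ) := by
  induction m with
  | zero =>
    intro i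
    simp only [fP, gP, coeff_one]
    rcases i with _ | i
    · simp
    · rw [Nat.choose_eq_zero_of_lt (by omega), Nat.choose_eq_zero_of_lt (by omega)]
      simp
  | succ n ih =>
    intro i
    obtain ⟨h1, h2⟩ := fg_step n
    have hf : (fP (n + 1)).coeff i = ((n + 1 + i).choose (2 * i) : ℤ) := by
      rw [h1, coeff_add, (ih i).1]
      rcases i with _ | i
      · simp
      · rw [coeff_X_mul, (ih i).2, show n + 1 + (i + 1) = (n + 1 + i) + 1 by ring,
          show 2 * (i + 1) = (2 * i + 1) + 1 by ring, Nat.choose_succ_succ,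
          show n + (i + 1) = n + 1 + i by ring]
        push_cast; rfl
    refine ⟨hf, ?_⟩
    rw [h2, coeff_add, hf, (ih i).2, show n + 1 + 1 + i = (n + 1 + i) + 1 by ring,
      Nat.choose_succ_succ]
    push_cast; rfl

theorem coeff_facts (p : Polynomial ℤ) (m : ℕ) (c : ℕ → ℕ)
    (h0 : ∀ i, m < i → p.coeff i = 0) (hc : ∀ i ≤ m, p.coeff i = c i)
    (hpos : ∀ i ≤ m, 0 < c i) (h1 : c m = 1) :
    p = ∑ i ∈ range (m + 1), C (c i : ℤ) * X ^ i ∧ (∀ i ≤ m, 0 < p.coeff i) ∧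
    p.degree = m ∧ p.Monic := by
  have hm : p.coeff m = 1 := by rw [hc m le_rfl, h1]; rfl
  have hle : p.degree ≤ m := (degree_le_iff_coeff_zero _ _).2 fun i hi => h0 i (by exact_mod_cast hi)
  refine ⟨?_, ?_, ?_, ?_⟩
  · ext i
    simp only [finset_sum_coeff, coeff_C_mul_X_pow, Finset.sum_ite_eq, Finset.mem_range]
    split_ifs with h
    · exact hc i (by omega)
    · exact h0 i (by omega)
  · intro i hi
    rw [hc i hi]; exact_mod_cast hpos i hi
  · exact degree_eq_of_le_of_coeff_ne_zero hle (by rw [hm]; exact one_ne_zero)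
  · exact monic_of_degree_le m hle hm

/-- Closed formulas for `f_m` and `g_m` (`m ≥ 0`): all coefficients are positive,
both have degree `m`, and both are monic. -/
theorem fg_closed_formula (m : ℕ) :
    fP m = ∑ i ∈ range (m + 1), C ((m + i).choose (m - i) : ℤ) * X ^ i ∧
    gP m = ∑ i ∈ range (m + 1), C ((m + 1 + i).choose (m - i) : ℤ) * X ^ i ∧
    (∀ i ≤ m, 0 < (fP m).coeff i) ∧
    (∀ i ≤ m, 0 < (gP m).coeff i) ∧
    (fP m).degree = m ∧ (gP m).degree = m ∧
    (fP m).Monic ∧ (gP m).Monic := by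
  obtain ⟨a, b, c, d⟩ := coeff_facts (fP m) m (fun i => (m + i).choose (m - i))
    (fun i hi => by rw [(fg_coeff m i).1, Nat.choose_eq_zero_of_lt (by omega)]; rfl)
    (fun i hi => by
      rw [(fg_coeff m i).1, Nat.choose_symm_of_eq_add (show m + i = 2 * i + (m - i) by omega)])
    (fun i hi => Nat.choose_pos (by omega)) (by simp)
  obtain ⟨a', b', c', d'⟩ := coeff_facts (gP m) m (fun i => (m + 1 + i).choose (m - i))
    (fun i hi => by rw [(fg_coeff m i).2, Nat.choose_eq_zero_of_lt (by omega)]; rfl)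
    (fun i hi => by
      rw [(fg_coeff m i).2,
        Nat.choose_symm_of_eq_add (show m + 1 + i = (2 * i + 1) + (m - i) by omega)])
    (fun i hi => Nat.choose_pos (by omega)) (by simp)
  exact ⟨a, a', b, b', c, c', d, d'⟩
end

section
/- For every integer m, the identity f_m² = s·g_m·g_{m-1} + 1 holds (as an identity of polynomials in s). -/
/-- `fN m` is the polynomial `f_m` (for `m ≥ 0`), viewed as a function of a real variable. -/
noncomputable def fN : ℕ → ℝ → ℝ
  | 0 => fun _ => 1
  | 1 => fun s => s + 1
  | n + 2 => fun s => (s + 2) * fN (n + 1) s - fN n s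

/-- `gN m` is the polynomial `g_m` (for `m ≥ 0`), viewed as a function of a real variable. -/
noncomputable def gN : ℕ → ℝ → ℝ
  | 0 => fun _ => 1
  | 1 => fun s => s + 2
  | n + 2 => fun s => (s + 2) * gN (n + 1) s - gN n s

/-- The two-sided family `f_m`, `m ∈ ℤ`, with `f_{-m} = f_{m-1}` for `m ≥ 1`. -/
noncomputable def fZ : ℤ → ℝ → ℝ
  | Int.ofNat n => fN n
  | Int.negSucc n => fN n

/-- The two-sided family `g_m`, `m ∈ ℤ`, with `g_{-1} = 0` and `g_{-m} = -g_{m-2}` for `m ≥ 2`. -/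
noncomputable def gZ : ℤ → ℝ → ℝ
  | Int.ofNat n => gN n
  | Int.negSucc 0 => fun _ => 0
  | Int.negSucc (n + 1) => fun s => -(gN n s)

theorem fN_eq_sub (s : ℝ) (n : ℕ) : fN (n + 1) s = gN (n + 1) s - gN n s ∧
    fN (n + 2) s = gN (n + 2) s - gN (n + 1) s := by
  induction n with
  | zero => constructor <;> simp only [fN, gN] <;> ring
  | succ k ih =>
    refine ⟨ih.2, ?_⟩
    have h1 : fN (k + 1 + 2) s = (s + 2) * fN (k + 2) s - fN (k + 1) s := rfl
    have h2 : gN (k + 1 + 2) s = (s + 2) * gN (k + 2) s - gN (k + 1) s := rfl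
    have h3 : gN (k + 2) s = (s + 2) * gN (k + 1) s - gN k s := rfl
    have h4 : gN (k + 1 + 1) s = gN (k + 2) s := rfl
    rw [h1, h2, h4, ih.1, ih.2]
    linear_combination h3

theorem gN_invariant (s : ℝ) (n : ℕ) :
    gN (n + 1) s ^ 2 - (s + 2) * gN (n + 1) s * gN n s + gN n s ^ 2 = 1 := by
  induction n with
  | zero => simp only [gN]; ring
  | succ k ih =>
    have h3 : gN (k + 1 + 1) s = (s + 2) * gN (k + 1) s - gN k s := rfl
    rw [h3]
    linear_combination ih

theorem fN_sq (s : ℝ) (n : ℕ) : fN (n + 1) s ^ 2 = s * gN (n + 1) s * gN n s + 1 := by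
  rw [(fN_eq_sub s n).1]
  linear_combination gN_invariant s n

/-- For every integer `m`, `f_m² = s·g_m·g_{m-1} + 1`. -/
theorem f_sq_eq (m : ℤ) (s : ℝ) : (fZ m s) ^ 2 = s * gZ m s * gZ (m - 1) s + 1 := by
  match m with
  | Int.ofNat 0 =>
    have h : gZ (Int.ofNat 0 - 1) s = 0 := rfl
    have h2 : fZ (Int.ofNat 0) s = 1 := by simp [fZ, fN]
    rw [h, h2]; ring
  | Int.ofNat (n + 1) =>
    have e : (Int.ofNat (n + 1) - 1) = Int.ofNat n := by simp
    rw [e]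
    exact fN_sq s n
  | Int.negSucc 0 =>
    have h : gZ (Int.negSucc 0) s = 0 := rfl
    have h2 : fZ (Int.negSucc 0) s = 1 := by simp [fZ, fN]
    rw [h, h2]; ring
  | Int.negSucc (n + 1) =>
    have e : (Int.negSucc (n + 1) - 1) = Int.negSucc (n + 1 + 1) := rfl
    have h1 : gZ (Int.negSucc (n + 1)) s = -gN n s := rfl
    have h2 : gZ (Int.negSucc (n + 1 + 1)) s = -gN (n + 1) s := rfl
    have h3 : fZ (Int.negSucc (n + 1)) s = fN (n + 1) s := rfl
    rw [e, h1, h2, h3]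
    linear_combination fN_sq s n
end

section
/- Let s > 0 be a real number. Then: (1) for every integer m ≥ 1, s·g_{m-1}(s) < 4·f_m(s); (2) for every integer m ≤ -1, -s·g_{m-1}(s) < 4·f_{m-1}(s); (3) for every integer m ≤ -1, -2s·g_{m-1}(s) < 3·f_{m-1}(s). -/
theorem fg_aux (s : ℝ) (hs : 0 < s) (n : ℕ) :
    0 < fN n s ∧ 0 < gN n s ∧ fN (n + 1) s = fN n s + s * gN n s ∧
      gN (n + 1) s = gN n s + fN (n + 1) s := by
  induction n with
  | zero =>
    simp only [fN, gN]
    refine ⟨by norm_num, by norm_num, by ring, by ring⟩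
  | succ k ih =>
    obtain ⟨h1, h2, h3, h4⟩ := ih
    have e1 : fN (k + 1 + 1) s = (s + 2) * fN (k + 1) s - fN k s := by simp only [fN]
    have e2 : gN (k + 1 + 1) s = (s + 2) * gN (k + 1) s - gN k s := by simp only [gN]
    have hp := mul_pos hs h2
    refine ⟨by linarith, by linarith, ?_, ?_⟩
    · rw [e1, h4]; linear_combination h3
    · rw [e2, e1, h4]; linear_combination -h3

/-- Inequalities satisfied by `f` and `g` for a positive real argument `s`. -/
theorem fg_inequalities (s : ℝ) (hs : 0 < s) :
    (∀ m : ℤ, 1 ≤ m → s * gZ (m - 1) s < 4 * fZ m s) ∧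
    (∀ m : ℤ, m ≤ -1 → -(s * gZ (m - 1) s) < 4 * fZ (m - 1) s) ∧
    (∀ m : ℤ, m ≤ -1 → -(2 * s * gZ (m - 1) s) < 3 * fZ (m - 1) s) := by
  have neg : ∀ m : ℤ, m ≤ -1 → ∃ n : ℕ, m - 1 = Int.negSucc (n + 1) := by
    intro m hm
    exact ⟨(-m - 1).toNat, by omega⟩
  refine ⟨?_, ?_, ?_⟩
  · intro m hm
    obtain ⟨n, h1, h2⟩ : ∃ n : ℕ, m - 1 = Int.ofNat n ∧ m = Int.ofNat (n + 1) :=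
      ⟨(m - 1).toNat, by simp; omega, by simp; omega⟩
    rw [h1, h2]
    simp only [gZ, fZ]
    obtain ⟨a, b, c, -⟩ := fg_aux s hs n
    have := mul_pos hs b
    linarith
  · intro m hm
    obtain ⟨n, h⟩ := neg m hm
    rw [h]
    simp only [gZ, fZ]
    obtain ⟨a, b, c, -⟩ := fg_aux s hs n
    have := mul_pos hs b
    linarith
  · intro m hm
    obtain ⟨n, h⟩ := neg m hm
    rw [h]
    simp only [gZ, fZ]
    obtain ⟨a, b, c, -⟩ := fg_aux s hs n
    have := mul_pos hs b
    linarith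
end

section
/- Let s be a real number, t > 0 a real number, and m an integer. Then the 2×2 real matrix W = (XY⁻¹)^m (X⁻¹Y)^m equals the matrix with (1,1)-entry f_m(s)² - s·t·g_{m-1}(s)², (1,2)-entry f_{m-1}(s)g_{m-1}(s) - f_m(s)g_{m-1}(s)/t, (2,1)-entry s·f_m(s)g_{m-1}(s) - s·t·f_{m-1}(s)g_{m-1}(s), and (2,2)-entry f_{m-1}(s)² - (s/t)·g_{m-1}(s)². -/
open Matrix

/-- The matrix `X = [[√t, 1/√t], [0, 1/√t]]`. -/
noncomputable def Xmat (t : ℝ) : Matrix (Fin 2) (Fin 2) ℝ :=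
  !![Real.sqrt t, 1 / Real.sqrt t; 0, 1 / Real.sqrt t]

/-- The matrix `Y = [[√t, 0], [-s√t, 1/√t]]`. -/
noncomputable def Ymat (s t : ℝ) : Matrix (Fin 2) (Fin 2) ℝ :=
  !![Real.sqrt t, 0; -s * Real.sqrt t, 1 / Real.sqrt t]

theorem fgN_rec (s : ℝ) (n : ℕ) :
    fN (n + 1) s = fN n s + s * gN n s ∧ gN (n + 1) s = gN n s + fN (n + 1) s := by
  induction n with
  | zero => constructor <;> simp [fN, gN] <;> ring
  | succ k ih =>
    obtain ⟨h1, h2⟩ := ih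
    have hf : fN (k + 1 + 1) s = (s + 2) * fN (k + 1) s - fN k s := rfl
    have hg : gN (k + 1 + 1) s = (s + 2) * gN (k + 1) s - gN k s := rfl
    constructor
    · rw [hf, h2]; linarith
    · rw [hf, hg, h2, h1]; ring

theorem fZ_rec (s : ℝ) (m : ℤ) : fZ (m + 1) s = fZ m s + s * gZ m s := by
  match m with
  | Int.ofNat n => exact (fgN_rec s n).1
  | Int.negSucc 0 => simp [fZ, gZ, fN]
  | Int.negSucc (n + 1) =>
    have h : Int.negSucc (n + 1) + 1 = Int.negSucc n := by omega
    rw [h]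
    change fN n s = fN (n + 1) s + s * -(gN n s)
    rw [(fgN_rec s n).1]; ring

theorem gZ_rec (s : ℝ) (m : ℤ) : gZ (m + 1) s = gZ m s + fZ (m + 1) s := by
  match m with
  | Int.ofNat n => exact (fgN_rec s n).2
  | Int.negSucc 0 => simp [fZ, gZ, fN, gN]
  | Int.negSucc 1 =>
    change (0 : ℝ) = -1 + 1
    norm_num
  | Int.negSucc (n + 2) =>
    have h : Int.negSucc (n + 2) + 1 = Int.negSucc (n + 1) := by omega
    rw [h]
    change -(gN n s) = -(gN (n + 1) s) + fN (n + 1) s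
    rw [(fgN_rec s n).2]; ring

theorem zpow_entries (s c d : ℝ) (hcd : c * d = s) (m : ℤ) :
    (!![1 + s, c; d, 1] : Matrix (Fin 2) (Fin 2) ℝ) ^ m =
      !![fZ m s, c * gZ (m - 1) s; d * gZ (m - 1) s, fZ (m - 1) s] := by
  have hu : IsUnit (!![1 + s, c; d, 1] : Matrix (Fin 2) (Fin 2) ℝ).det := by
    rw [Matrix.det_fin_two_of, hcd]; simp
  have step : ∀ m : ℤ, (!![fZ (m + 1) s, c * gZ m s; d * gZ m s, fZ m s] :
      Matrix (Fin 2) (Fin 2) ℝ) =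
      !![fZ m s, c * gZ (m - 1) s; d * gZ (m - 1) s, fZ (m - 1) s] * !![1 + s, c; d, 1] := by
    intro m
    have h1 := fZ_rec s m
    have h2 := fZ_rec s (m - 1)
    have h3 := gZ_rec s (m - 1)
    rw [sub_add_cancel] at h2 h3
    rw [Matrix.mul_fin_two, h1, h3, h2]
    subst hcd
    congr 1
    ext i j
    fin_cases i <;> fin_cases j <;> simp <;> ring
  induction m using Int.induction_on with
  | zero =>
    have h0 : fZ 0 s = 1 := rfl
    have h1 : fZ (-1) s = 1 := rfl
    have h2 : gZ (-1) s = 0 := rfl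
    ext i j
    fin_cases i <;> fin_cases j <;> simp [h0, h1, h2]
  | succ k ih =>
    rw [Matrix.zpow_add_one hu, ih, ← step, add_sub_cancel_right]
  | pred k ih =>
    rw [Matrix.zpow_sub_one hu, ih]
    have h := step (-(k : ℤ) - 1)
    rw [sub_add_cancel] at h
    rw [h, Matrix.mul_nonsing_inv_cancel_right _ _ hu]

/-- Entries of `W = (XY⁻¹)^m (X⁻¹Y)^m`. -/
theorem W_entries (s t : ℝ) (ht : 0 < t) (m : ℤ) :
    (Xmat t * (Ymat s t)⁻¹) ^ m * ((Xmat t)⁻¹ * Ymat s t) ^ m =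
      !![fZ m s ^ 2 - s * t * gZ (m - 1) s ^ 2,
         fZ (m - 1) s * gZ (m - 1) s - fZ m s * gZ (m - 1) s / t;
         s * fZ m s * gZ (m - 1) s - s * t * fZ (m - 1) s * gZ (m - 1) s,
         fZ (m - 1) s ^ 2 - s / t * gZ (m - 1) s ^ 2] := by
  have hr : 0 < Real.sqrt t := Real.sqrt_pos.mpr ht
  have hrr : Real.sqrt t ^ 2 = t := Real.sq_sqrt ht.le
  have hY : (Ymat s t)⁻¹ = !![1 / Real.sqrt t, 0; s * Real.sqrt t, Real.sqrt t] := by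
    apply Matrix.inv_eq_right_inv
    rw [Ymat, Matrix.mul_fin_two, Matrix.one_fin_two]
    ext i j
    fin_cases i <;> fin_cases j <;> simp <;> field_simp <;> ring
  have hX : (Xmat t)⁻¹ = !![1 / Real.sqrt t, -1 / Real.sqrt t; 0, Real.sqrt t] := by
    apply Matrix.inv_eq_right_inv
    rw [Xmat, Matrix.mul_fin_two, Matrix.one_fin_two]
    ext i j
    fin_cases i <;> fin_cases j <;> simp <;> field_simp <;> ring
  have hA : Xmat t * (Ymat s t)⁻¹ = !![1 + s, 1; s, 1] := by
    rw [hY, Xmat, Matrix.mul_fin_two]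
    ext i j
    fin_cases i <;> fin_cases j <;> simp <;> field_simp
  have hB : (Xmat t)⁻¹ * Ymat s t = !![1 + s, -1 / t; -(s * t), 1] := by
    rw [hX, Ymat, Matrix.mul_fin_two]
    ext i j
    fin_cases i <;> fin_cases j <;> simp <;> field_simp <;> (try rw [hrr]) <;> (try field_simp)
  rw [hA, hB, zpow_entries s 1 s (by ring), zpow_entries s (-1 / t) (-(s * t)) (by field_simp),
    Matrix.mul_fin_two]
  ext i j
  fin_cases i <;> fin_cases j <;> simp <;> field_simp <;> ring
end

section
/- Let m be a nonzero integer and let s, t be real numbers with s > 0, t > 1, and s + 2 < t + 1/t. Then the (1,2)-entry of W = (XY⁻¹)^m (X⁻¹Y)^m is nonzero; equivalently, g_{m-1}(s)·(f_{m-1}(s) - f_m(s)/t) ≠ 0. -/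
open Matrix

theorem aux_rel (s : ℝ) (n : ℕ) :
    fN (n+1) s = fN n s + s * gN n s ∧ gN (n+1) s = gN n s + fN (n+1) s := by
  induction n with
  | zero => constructor <;> simp [fN, gN] <;> ring
  | succ n ih =>
    obtain ⟨h1, h2⟩ := ih
    have e1 : fN (n+1+1) s = (s+2) * fN (n+1) s - fN n s := rfl
    have e2 : gN (n+1+1) s = (s+2) * gN (n+1) s - gN n s := rfl
    constructor
    · rw [e1, h2]; linear_combination h1
    · rw [e1, e2]; linear_combination (s+1) * h2 - h1

theorem aux_pos (s : ℝ) (hs : 0 < s) (n : ℕ) : 0 < fN n s ∧ 0 < gN n s := by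
  induction n with
  | zero => simp [fN, gN]
  | succ n ih =>
    obtain ⟨h1, h2⟩ := aux_rel s n
    obtain ⟨p, q⟩ := ih
    have : 0 < fN (n+1) s := by rw [h1]; positivity
    exact ⟨this, by rw [h2]; positivity⟩

theorem aux_lt (s t : ℝ) (hs : 0 < s) (ht : 1 < t) (h1 : s + 2 < t + 1 / t) (n : ℕ) :
    fN (n+1) s < t * fN n s := by
  have hu : 1 / t < 1 := by rw [div_lt_one (by linarith)]; exact ht
  induction n with
  | zero => simp [fN]; linarith
  | succ n ih =>
    have e1 : fN (n+1+1) s = (s+2) * fN (n+1) s - fN n s := rfl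
    have p := (aux_pos s hs (n+1)).1
    have h2 : 1 / t * fN (n+1) s < fN n s := by
      rw [one_div_mul_eq_div, div_lt_iff₀ (by linarith)]; linarith
    have h3 := mul_lt_mul_of_pos_right h1 p
    rw [e1]; linarith

theorem aux_A (s t : ℝ) (ht : 0 < t) : Xmat t * (Ymat s t)⁻¹ = !![1+s, 1; s, 1] := by
  have h0 : Real.sqrt t ≠ 0 := (Real.sqrt_pos.2 ht).ne'
  have : (Ymat s t)⁻¹ = !![1 / Real.sqrt t, 0; s * Real.sqrt t, Real.sqrt t] := by
    apply Matrix.inv_eq_right_inv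
    ext i j
    fin_cases i <;> fin_cases j <;> simp [Ymat, Matrix.mul_apply, Fin.sum_univ_two, h0]
    field_simp
    ring
  rw [this]
  ext i j
  fin_cases i <;> fin_cases j <;> simp [Xmat, Matrix.mul_apply, Fin.sum_univ_two, h0] <;> field_simp

theorem aux_B (s t : ℝ) (ht : 0 < t) :
    (Xmat t)⁻¹ * Ymat s t = !![1+s, -1/t; -s*t, 1] := by
  have h0 : Real.sqrt t ≠ 0 := (Real.sqrt_pos.2 ht).ne'
  have hq : Real.sqrt t * Real.sqrt t = t := Real.mul_self_sqrt ht.le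
  have : (Xmat t)⁻¹ = !![1 / Real.sqrt t, -1 / Real.sqrt t; 0, Real.sqrt t] := by
    apply Matrix.inv_eq_right_inv
    ext i j
    fin_cases i <;> fin_cases j <;> simp [Xmat, Matrix.mul_apply, Fin.sum_univ_two, h0]
    field_simp
    ring
  rw [this, Ymat]
  clear this
  generalize Real.sqrt t = r at *
  subst hq
  ext i j
  fin_cases i <;> fin_cases j <;> simp [Matrix.mul_apply, Fin.sum_univ_two] <;>
    field_simp

/-- Both matrices have the form of `c = 1` or `c = -1/t`. -/
theorem aux_pow (s c : ℝ) (hc : c ≠ 0) (n : ℕ) :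
    (!![1+s, c; s/c, 1] : Matrix (Fin 2) (Fin 2) ℝ) ^ (n+1)
      = !![fN (n+1) s, c * gN n s; s / c * gN n s, fN n s] := by
  induction n with
  | zero =>
    ext i j
    fin_cases i <;> fin_cases j <;> simp [fN, gN] <;> ring
  | succ n ih =>
    rw [pow_succ, ih]
    obtain ⟨h1, h2⟩ := aux_rel s n
    obtain ⟨h3, -⟩ := aux_rel s (n+1)
    rw [h3, h2, h1]
    ext i j
    fin_cases i <;> fin_cases j <;> simp [Matrix.mul_apply, Fin.sum_univ_two] <;> field_simp <;> ring

theorem aux_det (s : ℝ) (n : ℕ) :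
    fN (n+1) s * fN n s - s * gN n s ^ 2 = 1 := by
  induction n with
  | zero => simp [fN, gN]
  | succ n ih =>
    obtain ⟨h1, h2⟩ := aux_rel s n
    obtain ⟨h3, -⟩ := aux_rel s (n+1)
    rw [h3, h2, h1]
    rw [h1] at ih
    linear_combination ih

theorem aux_inv (s c : ℝ) (hc : c ≠ 0) (n : ℕ) :
    (!![1+s, c; s/c, 1] : Matrix (Fin 2) (Fin 2) ℝ) ^ (Int.negSucc n)
      = !![fN n s, -(c * gN n s); -(s / c * gN n s), fN (n+1) s] := by
  rw [zpow_negSucc, aux_pow s c hc]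
  apply Matrix.inv_eq_right_inv
  have h := aux_det s n
  ext i j
  fin_cases i <;> fin_cases j <;> simp [Matrix.mul_apply, Fin.sum_univ_two] <;> field_simp <;>
    first | linear_combination h | ring

/-- The `(1,2)`-entry of `W = (XY⁻¹)^m (X⁻¹Y)^m` is nonzero; equivalently
`g_{m-1}(s)·(f_{m-1}(s) - f_m(s)/t) ≠ 0`. -/
theorem W_entry12_ne_zero (m : ℤ) (hm : m ≠ 0) (s t : ℝ) (hs : 0 < s) (ht : 1 < t)
    (h1 : s + 2 < t + 1 / t) :
    ((Xmat t * (Ymat s t)⁻¹) ^ m * ((Xmat t)⁻¹ * Ymat s t) ^ m) 0 1 ≠ 0 ∧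
    gZ (m - 1) s * (fZ (m - 1) s - fZ m s / t) ≠ 0 := by
  have t0 : 0 < t := by linarith
  have hc : -1 / t ≠ 0 := by
    rw [neg_div]; exact neg_ne_zero.2 (by positivity)
  have hA : Xmat t * (Ymat s t)⁻¹ = !![1+s, 1; s/1, 1] := by rw [aux_A s t t0, div_one]
  have hB : (Xmat t)⁻¹ * Ymat s t = !![1+s, -1/t; s/(-1/t), 1] := by
    rw [aux_B s t t0]
    have : s / (-1/t) = -s*t := by field_simp
    rw [this]
  have key : gZ (m - 1) s * (fZ (m - 1) s - fZ m s / t) ≠ 0 ∧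
      ((Xmat t * (Ymat s t)⁻¹) ^ m * ((Xmat t)⁻¹ * Ymat s t) ^ m) 0 1
        = gZ (m - 1) s * (fZ (m - 1) s - fZ m s / t) := by
    rw [hA, hB]
    rcases m with n | n
    · obtain _ | n := n
      · exact absurd rfl hm
      have e : Int.ofNat (n+1) - 1 = Int.ofNat n := by simp
      rw [e]
      constructor
      · refine mul_ne_zero (aux_pos s hs n).2.ne' (sub_pos.2 ?_).ne'
        have := aux_lt s t hs ht h1 n
        change fN (n+1) s / t < fN n s
        rw [div_lt_iff₀ t0]; linarith
      · change _ = gN n s * (fN n s - fN (n+1) s / t)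
        rw [Int.ofNat_eq_natCast, zpow_natCast, zpow_natCast, aux_pow s 1 one_ne_zero,
          aux_pow s _ hc]
        simp [Matrix.mul_apply, Fin.sum_univ_two]
        ring
    · have e : Int.negSucc n - 1 = Int.negSucc (n+1) := by
        simp only [Int.negSucc_eq]; push_cast; ring
      rw [e]
      constructor
      · refine mul_ne_zero (neg_ne_zero.2 (aux_pos s hs n).2.ne') (sub_pos.2 ?_).ne'
        change fN n s / t < fN (n+1) s
        have h2 := (aux_rel s n).1
        obtain ⟨p, q⟩ := aux_pos s hs n
        have h3 : fN n s / t < fN n s := div_lt_self p ht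
        have h4 := mul_pos hs q
        linarith
      · change _ = -(gN n s) * (fN (n+1) s - fN n s / t)
        rw [aux_inv s 1 one_ne_zero, aux_inv s _ hc]
        simp [Matrix.mul_apply, Fin.sum_univ_two]
        ring
  exact ⟨key.2 ▸ key.1, key.1⟩
end

section
/- Let m, n be integers and let s, t be real numbers with t > 0. Let W = (XY⁻¹)^m (X⁻¹Y)^m, let τ = tr W, and let (τ_k)_{k∈ℤ} be the sequence with τ_0 = 0, τ_1 = 1, τ_{k+1} = τ·τ_k - τ_{k-1}. Writing z_{i,j} for the entries of W^n, the identity z_{1,1} + (1 - t)·z_{1,2} = (τ_{n+1} - τ_n) + (s + 2 - t - 1/t)·f_{m-1}(s)·g_{m-1}(s)·τ_n holds. -/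
open Matrix

/-- Powers of a determinant-one matrix through its trace sequence. -/
theorem zpow_eq_of_rec (M : Matrix (Fin 2) (Fin 2) ℝ) (hM : M.det = 1) (u : ℤ → ℝ)
    (h0 : u 0 = 0) (h1 : u 1 = 1)
    (hrec : ∀ k : ℤ, u (k + 1) = M.trace * u k - u (k - 1)) (n : ℤ) :
    M ^ n = u n • M - u (n - 1) • (1 : Matrix (Fin 2) (Fin 2) ℝ) := by
  have hu : IsUnit M.det := by rw [hM]; exact isUnit_one
  have hinv : M⁻¹ = !![M 1 1, -M 0 1; -M 1 0, M 0 0] := by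
    rw [Matrix.inv_def, hM, Matrix.adjugate_fin_two]; simp
  rw [Matrix.det_fin_two] at hM
  induction n using Int.induction_on with
  | zero =>
    have := hrec 0
    simp only [h0, zero_add, h1] at this
    have h2 : u (0 - 1) = -1 := by linarith
    rw [h2, h0]; simp
  | succ i ih =>
    rw [Matrix.zpow_add_one hu, ih, hrec]
    simp only [Matrix.trace_fin_two, add_sub_cancel_right]
    ext a b
    fin_cases a <;> fin_cases b <;> simp [Matrix.mul_apply, Fin.sum_univ_two] <;>
      grind
  | pred i ih =>
    rw [Matrix.zpow_sub_one hu, ih, hinv]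
    have h := hrec (-(i : ℤ) - 1)
    simp only [Matrix.trace_fin_two, sub_add_cancel] at h
    rw [h]
    ext a b
    fin_cases a <;> fin_cases b <;> simp [Matrix.mul_apply, Fin.sum_univ_two] <;>
      grind

theorem gZ_rec_s9 (s : ℝ) (k : ℤ) : gZ (k + 1) s = (s + 2) * gZ k s - gZ (k - 1) s := by
  rcases k with (_ | n) | (_ | _ | n)
  · change gN 1 s = (s + 2) * gN 0 s - 0
    simp [gN]
  · have e : (Int.ofNat (n + 1) - 1) = Int.ofNat n := by simp
    rw [e]
    change gN (n + 2) s = _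
    simp [gN, gZ]
  · change gN 0 s = (s + 2) * 0 - (-(gN 0 s))
    simp
  · change 0 = (s + 2) * (-(gN 0 s)) - (-(gN 1 s))
    simp [gN]
  · change -(gN n s) = (s + 2) * (-(gN (n + 1) s)) - (-(gN (n + 2) s))
    simp only [gN]
    ring

theorem fN_eq (s : ℝ) (n : ℕ) :
    fN n s = gZ n s - gZ (n - 1) s ∧ fN (n + 1) s = gZ (n + 1) s - gZ n s := by
  induction n with
  | zero =>
    constructor
    · change (1 : ℝ) = 1 - 0
      simp
    · change s + 1 = (s + 2) - 1
      ring
  | succ n ih =>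
    push_cast
    rw [add_sub_cancel_right]
    refine ⟨ih.2, ?_⟩
    have h1 := gZ_rec_s9 s n
    have h2 := gZ_rec_s9 s (n + 1)
    rw [add_sub_cancel_right] at h2
    change (s + 2) * fN (n + 1) s - fN n s = _
    rw [ih.1, ih.2]
    linarith

theorem gZ_neg (s : ℝ) (n : ℕ) : gZ (Int.negSucc n) s = - gZ ((n : ℤ) - 1) s := by
  rcases n with _ | n
  · change (0 : ℝ) = -0
    simp
  · push_cast
    rw [add_sub_cancel_right]
    rfl

theorem fZ_eq (s : ℝ) (k : ℤ) : fZ k s = gZ k s - gZ (k - 1) s := by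
  rcases k with n | n
  · exact (fN_eq s n).1
  · have e : Int.negSucc n - 1 = Int.negSucc (n + 1) := rfl
    rw [e, gZ_neg, gZ_neg]
    push_cast
    rw [add_sub_cancel_right]
    have := (fN_eq s n).1
    change fN n s = _
    linarith

theorem gZ_quad (s : ℝ) (k : ℤ) :
    gZ k s ^ 2 + gZ (k - 1) s ^ 2 - (s + 2) * gZ k s * gZ (k - 1) s = 1 := by
  induction k using Int.induction_on with
  | zero =>
    change (1 : ℝ) ^ 2 + 0 ^ 2 - (s + 2) * 1 * 0 = 1
    ring
  | succ i ih =>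
    rw [add_sub_cancel_right, gZ_rec_s9]
    linarith
  | pred i ih =>
    have h := gZ_rec_s9 s (-(i : ℤ) - 1)
    rw [sub_add_cancel] at h
    rw [h] at ih
    linarith

/-- The Riley polynomial of `K(m,n)`:
`z_{1,1} + (1-t) z_{1,2} = (τ_{n+1} - τ_n) + (s + 2 - t - 1/t) f_{m-1} g_{m-1} τ_n`,
where `z_{i,j}` are the entries of `W^n` and `(τ_k)` is the trace-recursion sequence of
`W = (XY⁻¹)^m (X⁻¹Y)^m`. -/
theorem riley_polynomial (m n : ℤ) (s t : ℝ) (ht : 0 < t)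
    (τseq : ℤ → ℝ) (h0 : τseq 0 = 0) (h1 : τseq 1 = 1)
    (hrec : ∀ k : ℤ, τseq (k + 1) =
      Matrix.trace ((Xmat t * (Ymat s t)⁻¹) ^ m * ((Xmat t)⁻¹ * Ymat s t) ^ m) * τseq k
        - τseq (k - 1)) :
    (((Xmat t * (Ymat s t)⁻¹) ^ m * ((Xmat t)⁻¹ * Ymat s t) ^ m) ^ n) 0 0 +
      (1 - t) * (((Xmat t * (Ymat s t)⁻¹) ^ m * ((Xmat t)⁻¹ * Ymat s t) ^ m) ^ n) 0 1 =
    (τseq (n + 1) - τseq n) +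
      (s + 2 - t - 1 / t) * fZ (m - 1) s * gZ (m - 1) s * τseq n := by
  have hr : 0 < Real.sqrt t := Real.sqrt_pos.mpr ht
  have hrr : Real.sqrt t * Real.sqrt t = t := Real.mul_self_sqrt ht.le
  have hA : Xmat t * (Ymat s t)⁻¹ = !![1 + s, 1; s, 1] := by
    have hd : (Ymat s t).det = 1 := by
      rw [Matrix.det_fin_two]; simp [Ymat, hr.ne']
    rw [Matrix.inv_def, hd, Matrix.adjugate_fin_two]
    ext a b
    fin_cases a <;> fin_cases b <;> simp [Xmat, Ymat, Matrix.mul_apply, Fin.sum_univ_two] <;>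
      field_simp
  have hB : (Xmat t)⁻¹ * Ymat s t = !![1 + s, -1 / t; -s * t, 1] := by
    have hd : (Xmat t).det = 1 := by
      rw [Matrix.det_fin_two]; simp [Xmat, hr.ne']
    rw [Matrix.inv_def, hd, Matrix.adjugate_fin_two]
    ext a b
    fin_cases a <;> fin_cases b <;> simp [Xmat, Ymat, Matrix.mul_apply, Fin.sum_univ_two] <;>
      field_simp <;> grind
  have hu0 : gZ (0 - 1) s = 0 := rfl
  have hu1 : gZ (1 - 1) s = 1 := rfl
  have hrecg : ∀ k : ℤ, gZ (k + 1 - 1) s = (s + 2) * gZ (k - 1) s - gZ (k - 1 - 1) s := by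
    intro k
    have := gZ_rec_s9 s (k - 1)
    rw [sub_add_cancel] at this
    rw [add_sub_cancel_right, this]
  have hdA : (!![1 + s, 1; s, 1] : Matrix (Fin 2) (Fin 2) ℝ).det = 1 := by
    rw [Matrix.det_fin_two_of]; ring
  have hdB : (!![1 + s, -1 / t; -s * t, 1] : Matrix (Fin 2) (Fin 2) ℝ).det = 1 := by
    rw [Matrix.det_fin_two_of]; field_simp; ring
  have hAm := zpow_eq_of_rec _ hdA (fun k => gZ (k - 1) s) hu0 hu1
    (by intro k; rw [Matrix.trace_fin_two_of, hrecg]; ring) m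
  have hBm := zpow_eq_of_rec _ hdB (fun k => gZ (k - 1) s) hu0 hu1
    (by intro k; rw [Matrix.trace_fin_two_of, hrecg]; ring) m
  simp only [hA, hB] at hrec ⊢
  have hq := gZ_quad s (m - 1)
  have hdAm : ((!![1 + s, 1; s, 1] : Matrix (Fin 2) (Fin 2) ℝ) ^ m).det = 1 := by
    rw [hAm, Matrix.det_fin_two]
    simp
    linear_combination hq
  have hdBm : ((!![1 + s, -1 / t; -s * t, 1] : Matrix (Fin 2) (Fin 2) ℝ) ^ m).det = 1 := by
    rw [hBm, Matrix.det_fin_two]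
    simp
    field_simp
    linear_combination hq
  have hdW := Matrix.det_mul ((!![1 + s, 1; s, 1] : Matrix (Fin 2) (Fin 2) ℝ) ^ m)
    ((!![1 + s, -1 / t; -s * t, 1] : Matrix (Fin 2) (Fin 2) ℝ) ^ m)
  rw [hdAm, hdBm, one_mul] at hdW
  have key : ∀ W : Matrix (Fin 2) (Fin 2) ℝ,
      W = (!![1 + s, 1; s, 1] : Matrix (Fin 2) (Fin 2) ℝ) ^ m *
        (!![1 + s, -1 / t; -s * t, 1] : Matrix (Fin 2) (Fin 2) ℝ) ^ m →
      (1 - t) * W 0 1 - W 1 1 =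
        -1 + (s + 2 - t - 1 / t) * fZ (m - 1) s * gZ (m - 1) s := by
    intro W hW
    rw [hW, hAm, hBm, fZ_eq]
    generalize gZ (m - 1) s = a at *
    generalize gZ (m - 1 - 1) s = b at *
    simp [Matrix.mul_apply, Fin.sum_univ_two]
    field_simp
    linear_combination (-t) * hq
  have key' := key _ rfl
  have hWn := zpow_eq_of_rec _ hdW τseq h0 h1 hrec n
  clear key hAm hBm hdAm hdBm
  generalize (!![1 + s, 1; s, 1] : Matrix (Fin 2) (Fin 2) ℝ) ^ m *
        (!![1 + s, -1 / t; -s * t, 1] : Matrix (Fin 2) (Fin 2) ℝ) ^ m = W at *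
  rw [hWn, hrec n, Matrix.trace_fin_two]
  simp only [Matrix.sub_apply, Matrix.smul_apply, Matrix.one_apply, smul_eq_mul]
  norm_num
  linear_combination τseq n * key'
end

section
/- Let k ≥ 2 be an integer and set θ = 3π/(2k+1). Then U_{k-1}(cos θ) = U_k(cos θ), and this common value equals sin(3kπ/(2k+1))/sin(3π/(2k+1)), which is negative. -/
open Polynomial Real

/-- For `k ≥ 2` and `θ = 3π/(2k+1)`, `U_{k-1}(cos θ) = U_k(cos θ)`, and this common value
equals `sin(3kπ/(2k+1))/sin(3π/(2k+1))`, which is negative. -/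
theorem chebyshev_value_neg (k : ℤ) (hk : 2 ≤ k) :
    (Polynomial.Chebyshev.U ℝ (k - 1)).eval (Real.cos (3 * π / (2 * k + 1))) =
      (Polynomial.Chebyshev.U ℝ k).eval (Real.cos (3 * π / (2 * k + 1))) ∧
    (Polynomial.Chebyshev.U ℝ (k - 1)).eval (Real.cos (3 * π / (2 * k + 1))) =
      Real.sin (3 * k * π / (2 * k + 1)) / Real.sin (3 * π / (2 * k + 1)) ∧
    (Polynomial.Chebyshev.U ℝ (k - 1)).eval (Real.cos (3 * π / (2 * k + 1))) < 0 := by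
  have hk' : (2 : ℝ) ≤ (k : ℝ) := by exact_mod_cast hk
  have hpi := Real.pi_pos
  have hd : (0 : ℝ) < 2 * k + 1 := by linarith
  have harg : 3 * (k : ℝ) * π / (2 * k + 1) = k * (3 * π / (2 * k + 1)) := by ring
  rw [harg]
  have ht : (2 * (k : ℝ) + 1) * (3 * π / (2 * k + 1)) = 3 * π := by field_simp
  have ht0 : 0 < 3 * π / (2 * (k : ℝ) + 1) := by positivity
  generalize 3 * π / (2 * (k : ℝ) + 1) = t at *
  have htpi : t < π := by nlinarith
  have hs : 0 < Real.sin t := Real.sin_pos_of_pos_of_lt_pi ht0 htpi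
  have h1 := Polynomial.Chebyshev.U_real_cos t (k - 1)
  have h2 := Polynomial.Chebyshev.U_real_cos t k
  push_cast at h1
  rw [sub_add_cancel] at h1
  have h3 : Real.sin (((k : ℝ) + 1) * t) = Real.sin (k * t) := by
    have e : ((k : ℝ) + 1) * t = π - k * t + 2 * π := by linarith
    rw [e, Real.sin_add_two_pi, Real.sin_pi_sub]
  have hneg : Real.sin ((k : ℝ) * t) < 0 := by
    have h4 : 0 < Real.sin ((k : ℝ) * t - π) := by
      apply Real.sin_pos_of_pos_of_lt_pi
      · nlinarith
      · nlinarith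
    rw [Real.sin_sub_pi] at h4
    linarith
  have hv := (eq_div_iff hs.ne').2 h1
  refine ⟨?_, hv, ?_⟩
  · apply mul_right_cancel₀ hs.ne'
    rw [h1, h2, h3]
  · rw [hv]
    exact div_neg_of_neg_of_pos hneg hs
end

section
/- Let m be a nonzero integer, let n ≥ 2 be an integer, and let s > 0 be a real number. Set c = 2 - 2cos(π/(2n+1)) and c' = 2 - 2cos(3π/(2n+1)). Then there exists a real number T with s + 2 + c/(s·g_{m-1}(s)²) < T < s + 2 + c'/(s·g_{m-1}(s)²) such that Φ(T) = 0, where Φ(T) = (U_n(τ(T)/2) - U_{n-1}(τ(T)/2)) + (s + 2 - T)·f_{m-1}(s)·g_{m-1}(s)·U_{n-1}(τ(T)/2) and τ(T) = s·(s + 2 - T)·g_{m-1}(s)² + 2. -/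
open Polynomial Real

lemma fN_aux (s : ℝ) (hs : 0 < s) (n : ℕ) : 0 < fN n s ∧ fN n s ≤ fN (n + 1) s := by
  induction n with
  | zero => simp [fN]; linarith
  | succ k ih =>
    obtain ⟨h1, h2⟩ := ih
    refine ⟨by linarith, ?_⟩
    show fN (k + 1) s ≤ (s + 2) * fN (k + 1) s - fN k s
    nlinarith

lemma gN_aux (s : ℝ) (hs : 0 < s) (n : ℕ) : 0 < gN n s ∧ gN n s ≤ gN (n + 1) s := by
  induction n with
  | zero => simp [gN]; linarith
  | succ k ih =>
    obtain ⟨h1, h2⟩ := ih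
    refine ⟨by linarith, ?_⟩
    show gN (k + 1) s ≤ (s + 2) * gN (k + 1) s - gN k s
    nlinarith

lemma fZ_ne (s : ℝ) (hs : 0 < s) (m : ℤ) : fZ m s ≠ 0 := by
  cases m with
  | ofNat k => exact (fN_aux s hs k).1.ne'
  | negSucc k => exact (fN_aux s hs k).1.ne'

lemma gZ_ne (s : ℝ) (hs : 0 < s) (m : ℤ) (hm : m ≠ -1) : gZ m s ≠ 0 := by
  match m, hm with
  | Int.ofNat k, _ => exact (gN_aux s hs k).1.ne'
  | Int.negSucc 0, h => exact absurd rfl h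
  | Int.negSucc (k + 1), _ => exact neg_ne_zero.mpr (gN_aux s hs k).1.ne'

lemma core (n : ℤ) (hn : 2 ≤ n) (k : ℝ) (hk : k ≠ 0) :
    ∃ θ : ℝ, π / (2 * n + 1) < θ ∧ θ < 3 * π / (2 * n + 1) ∧ 3 * π / (2 * n + 1) < π ∧
      ((Polynomial.Chebyshev.U ℝ n).eval (cos θ) -
        (Polynomial.Chebyshev.U ℝ (n - 1)).eval (cos θ)) -
      (2 - 2 * cos θ) * k * (Polynomial.Chebyshev.U ℝ (n - 1)).eval (cos θ) = 0 := by
  have hn' : (2 : ℝ) ≤ n := by exact_mod_cast hn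
  have hd : (0 : ℝ) < 2 * n + 1 := by linarith
  have hpi := Real.pi_pos
  set a := π / (2 * n + 1) with ha
  have hb : 3 * π / (2 * n + 1) = 3 * a := by rw [ha]; ring
  have hna : (n : ℝ) * a = π / 2 - a / 2 := by rw [ha]; field_simp; ring
  rw [hb]
  have ha0 : 0 < a := by positivity
  have h5 : 5 * a ≤ π := by nlinarith
  set F : ℝ → ℝ := fun θ => k * (((Polynomial.Chebyshev.U ℝ n).eval (cos θ) -
        (Polynomial.Chebyshev.U ℝ (n - 1)).eval (cos θ)) -
      (2 - 2 * cos θ) * k * (Polynomial.Chebyshev.U ℝ (n - 1)).eval (cos θ)) with hF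
  have hc : Continuous F := by fun_prop
  have hcos : ∀ θ, 0 < θ → θ < π → cos θ < 1 := by
    intro θ h0 h1
    have := Real.cos_lt_cos_of_nonneg_of_le_pi le_rfl h1.le h0
    simpa using this
  have hUm : ∀ θ, (Polynomial.Chebyshev.U ℝ (n - 1)).eval (cos θ) * sin θ = sin (n * θ) := by
    intro θ
    have := Polynomial.Chebyshev.U_real_cos θ (n - 1)
    rw [this]; congr 1; push_cast; ring
  have hU : ∀ θ, (Polynomial.Chebyshev.U ℝ n).eval (cos θ) * sin θ = sin ((n + 1) * θ) :=
    fun θ => Polynomial.Chebyshev.U_real_cos θ n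
  have hk2 : 0 < k ^ 2 := by positivity
  have h1 : F a < 0 := by
    have hs : 0 < sin a := Real.sin_pos_of_pos_of_lt_pi ha0 (by linarith)
    have e : sin ((n + 1) * a) = sin (n * a) := by
      rw [← Real.sin_pi_sub]; congr 1; linarith
    have e2 : (Polynomial.Chebyshev.U ℝ n).eval (cos a) =
        (Polynomial.Chebyshev.U ℝ (n - 1)).eval (cos a) := by
      apply mul_right_cancel₀ hs.ne'
      rw [hU, hUm, e]
    have p : 0 < sin (n * a) := Real.sin_pos_of_pos_of_lt_pi (by positivity) (by linarith)
    rw [← hUm] at p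
    have p2 := pos_of_mul_pos_left p hs.le
    have := mul_pos (mul_pos hk2 (sub_pos.mpr (hcos a ha0 (by linarith)))) p2
    simp only [hF, e2]
    nlinarith
  have h2 : 0 < F (3 * a) := by
    have hs : 0 < sin (3 * a) := Real.sin_pos_of_pos_of_lt_pi (by linarith) (by linarith)
    have e : sin ((n + 1) * (3 * a)) = sin (n * (3 * a)) := by
      rw [← Real.sin_pi_sub, ← Real.sin_add_two_pi]; congr 1; linarith
    have e2 : (Polynomial.Chebyshev.U ℝ n).eval (cos (3 * a)) =
        (Polynomial.Chebyshev.U ℝ (n - 1)).eval (cos (3 * a)) := by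
      apply mul_right_cancel₀ hs.ne'
      rw [hU, hUm, e]
    have p : 0 < sin (n * (3 * a) - π) :=
      Real.sin_pos_of_pos_of_lt_pi (by linarith) (by linarith)
    rw [Real.sin_sub_pi, ← hUm, ← neg_mul] at p
    have p2 := pos_of_mul_pos_left p hs.le
    have := mul_pos (mul_pos hk2 (sub_pos.mpr (hcos (3 * a) (by linarith) (by linarith)))) p2
    simp only [hF, e2]
    nlinarith
  obtain ⟨θ, ⟨t1, t2⟩, t3⟩ := intermediate_value_Ioo (by linarith : a ≤ 3 * a)
    hc.continuousOn ⟨h1, h2⟩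
  refine ⟨θ, t1, t2, by linarith, ?_⟩
  exact (mul_eq_zero.mp t3).resolve_left hk

/-- For `m ≠ 0`, `n ≥ 2` and `s > 0`, the function
`Φ(T) = (U_n(τ(T)/2) - U_{n-1}(τ(T)/2)) + (s+2-T) f_{m-1} g_{m-1} U_{n-1}(τ(T)/2)`,
with `τ(T) = s(s+2-T) g_{m-1}² + 2`, has a zero `T` with
`s + 2 + c/(s g_{m-1}²) < T < s + 2 + c'/(s g_{m-1}²)`, where `c = 2 - 2cos(π/(2n+1))`
and `c' = 2 - 2cos(3π/(2n+1))`. -/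
theorem riley_root_exists_pos (m n : ℤ) (hm : m ≠ 0) (hn : 2 ≤ n) (s : ℝ) (hs : 0 < s) :
    ∃ T : ℝ,
      s + 2 + (2 - 2 * Real.cos (π / (2 * n + 1))) / (s * gZ (m - 1) s ^ 2) < T ∧
      T < s + 2 + (2 - 2 * Real.cos (3 * π / (2 * n + 1))) / (s * gZ (m - 1) s ^ 2) ∧
      ((Polynomial.Chebyshev.U ℝ n).eval ((s * (s + 2 - T) * gZ (m - 1) s ^ 2 + 2) / 2) -
        (Polynomial.Chebyshev.U ℝ (n - 1)).eval
          ((s * (s + 2 - T) * gZ (m - 1) s ^ 2 + 2) / 2)) +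
      (s + 2 - T) * fZ (m - 1) s * gZ (m - 1) s *
        (Polynomial.Chebyshev.U ℝ (n - 1)).eval
          ((s * (s + 2 - T) * gZ (m - 1) s ^ 2 + 2) / 2) = 0 := by
  have hg := gZ_ne s hs (m - 1) (by omega)
  have hf := fZ_ne s hs (m - 1)
  set g := gZ (m - 1) s
  set f := fZ (m - 1) s
  have hsg : 0 < s * g ^ 2 := by positivity
  have hn' : (2 : ℝ) ≤ n := by exact_mod_cast hn
  have ha : 0 < π / (2 * n + 1) := div_pos Real.pi_pos (by linarith)
  obtain ⟨θ, h1, h2, h3, h4⟩ := core n hn (f * g / (s * g ^ 2))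
    (div_ne_zero (mul_ne_zero hf hg) hsg.ne')
  have c1 := Real.cos_lt_cos_of_nonneg_of_le_pi ha.le (by linarith) h1
  have c2 := Real.cos_lt_cos_of_nonneg_of_le_pi (by linarith) h3.le h2
  refine ⟨s + 2 + (2 - 2 * cos θ) / (s * g ^ 2), ?_, ?_, ?_⟩
  · have := div_lt_div_of_pos_right (by linarith :
      2 - 2 * cos (π / (2 * n + 1)) < 2 - 2 * cos θ) hsg
    linarith
  · have := div_lt_div_of_pos_right (by linarith :
      2 - 2 * cos θ < 2 - 2 * cos (3 * π / (2 * n + 1))) hsg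
    linarith
  · have e : (s * (s + 2 - (s + 2 + (2 - 2 * cos θ) / (s * g ^ 2))) * g ^ 2 + 2) / 2 = cos θ := by
      field_simp
      ring
    rw [e, ← h4]
    ring
end

section
/- Let s, t be real numbers with s > 0, t > 1 and t + 1/t > s + 2, and set σ = s·(√t - 1/√t)²/((√t - 1/√t)² - s). Let m be an integer, let U = (X'Y'⁻¹)^m (X'⁻¹Y')^m and U_* = (Y'X'⁻¹)^m (Y'⁻¹X')^m. Then for every integer n, writing v_{i,j} for the entries of U^n, one has U_*^n = [[v_{1,1}, v_{2,1}/σ], [v_{1,2}·σ, v_{2,2}]]. -/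
open Matrix

/-- The matrix `X' = [[√t, 0], [0, 1/√t]]`. -/
noncomputable def Xmat' (t : ℝ) : Matrix (Fin 2) (Fin 2) ℝ :=
  !![Real.sqrt t, 0; 0, 1 / Real.sqrt t]

/-- The matrix `Y' = [[(t-s-1)/(√t-1/√t), s/(√t-1/√t)² - 1], [-s, (s+1-1/t)/(√t-1/√t)]]`. -/
noncomputable def Ymat' (s t : ℝ) : Matrix (Fin 2) (Fin 2) ℝ :=
  !![(t - s - 1) / (Real.sqrt t - 1 / Real.sqrt t),
     s / (Real.sqrt t - 1 / Real.sqrt t) ^ 2 - 1;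
     -s, (s + 1 - 1 / t) / (Real.sqrt t - 1 / Real.sqrt t)]

lemma Xdet_aux (t : ℝ) (ht : 1 < t) : (Xmat' t).det = 1 := by
  have h : Real.sqrt t ≠ 0 := (Real.sqrt_pos.2 (by linarith)).ne'
  simp [Xmat', Matrix.det_fin_two_of, h]

lemma L_aux (t : ℝ) (ht : 1 < t) :
    (Real.sqrt t - 1 / Real.sqrt t) ^ 2 = t - 2 + 1 / t := by
  have h : Real.sqrt t ≠ 0 := (Real.sqrt_pos.2 (by linarith)).ne'
  have h2 : Real.sqrt t ^ 2 = t := Real.sq_sqrt (by linarith)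
  have h3 : (Real.sqrt t - 1 / Real.sqrt t) ^ 2
      = Real.sqrt t ^ 2 - 2 + 1 / Real.sqrt t ^ 2 := by
    field_simp
    ring
  rw [h3, h2]

lemma Ydet_aux (s t : ℝ) (hs : 0 < s) (ht : 1 < t) (hT : s + 2 < t + 1 / t) :
    (Ymat' s t).det = 1 := by
  have hL := L_aux t ht
  have ht0 : t ≠ 0 := by linarith
  rw [Ymat', Matrix.det_fin_two_of]
  generalize Real.sqrt t - 1 / Real.sqrt t = w at *
  have hw2 : w ^ 2 ≠ 0 := by
    have : 0 < w ^ 2 := by linarith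
    exact this.ne'
  have hw : w ≠ 0 := fun h => hw2 (by simp [h])
  have e : (t - s - 1) / w * ((s + 1 - 1 / t) / w) - (s / w ^ 2 - 1) * -s
      = ((t - s - 1) * (s + 1 - 1 / t) + s ^ 2 - s * w ^ 2) / w ^ 2 := by
    field_simp
    ring
  rw [e, div_eq_one_iff_eq hw2, hL]
  field_simp
  ring

/-- With `U = (X'Y'⁻¹)^m (X'⁻¹Y')^m` and `U_* = (Y'X'⁻¹)^m (Y'⁻¹X')^m`, for every integer `n`
the matrix `U_*^n` is obtained from `U^n = (v_{i,j})` as `[[v₁₁, v₂₁/σ], [v₁₂σ, v₂₂]]`,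
where `σ = s(√t-1/√t)²/((√t-1/√t)² - s)`. -/
theorem Ustar_pow_entries (s t : ℝ) (hs : 0 < s) (ht : 1 < t)
    (hT : s + 2 < t + 1 / t) (m : ℤ) :
    ∀ n : ℤ,
      ((Ymat' s t * (Xmat' t)⁻¹) ^ m * ((Ymat' s t)⁻¹ * Xmat' t) ^ m) ^ n =
      !![(((Xmat' t * (Ymat' s t)⁻¹) ^ m * ((Xmat' t)⁻¹ * Ymat' s t) ^ m) ^ n) 0 0,
         (((Xmat' t * (Ymat' s t)⁻¹) ^ m * ((Xmat' t)⁻¹ * Ymat' s t) ^ m) ^ n) 1 0 /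
           (s * (Real.sqrt t - 1 / Real.sqrt t) ^ 2 / ((Real.sqrt t - 1 / Real.sqrt t) ^ 2 - s));
         (((Xmat' t * (Ymat' s t)⁻¹) ^ m * ((Xmat' t)⁻¹ * Ymat' s t) ^ m) ^ n) 0 1 *
           (s * (Real.sqrt t - 1 / Real.sqrt t) ^ 2 / ((Real.sqrt t - 1 / Real.sqrt t) ^ 2 - s)),
         (((Xmat' t * (Ymat' s t)⁻¹) ^ m * ((Xmat' t)⁻¹ * Ymat' s t) ^ m) ^ n) 1 1] := by
  intro n
  have hX := Xdet_aux t ht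
  have hY := Ydet_aux s t hs ht hT
  have hL := L_aux t ht
  have hLs : 0 < (Real.sqrt t - 1 / Real.sqrt t) ^ 2 - s := by linarith
  have hL0 : 0 < (Real.sqrt t - 1 / Real.sqrt t) ^ 2 := by linarith
  have hσ : 0 < s * (Real.sqrt t - 1 / Real.sqrt t) ^ 2 /
      ((Real.sqrt t - 1 / Real.sqrt t) ^ 2 - s) := by positivity
  have hYσ : (Ymat' s t) 0 1 * (s * (Real.sqrt t - 1 / Real.sqrt t) ^ 2 /
      ((Real.sqrt t - 1 / Real.sqrt t) ^ 2 - s)) = (Ymat' s t) 1 0 := by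
    simp only [Ymat', Matrix.of_apply, Matrix.cons_val_zero, Matrix.cons_val_one,
      Matrix.cons_val', Matrix.cons_val_fin_one]
    generalize (Real.sqrt t - 1 / Real.sqrt t) ^ 2 = L at *
    have := hLs.ne'
    have := hL0.ne'
    field_simp
    ring
  generalize s * (Real.sqrt t - 1 / Real.sqrt t) ^ 2 /
      ((Real.sqrt t - 1 / Real.sqrt t) ^ 2 - s) = σ at *
  have hX01 : (Xmat' t) 0 1 = 0 := by simp [Xmat']
  have hX10 : (Xmat' t) 1 0 = 0 := by simp [Xmat']
  generalize Xmat' t = X at *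
  generalize Ymat' s t = Y at *
  have uX : IsUnit X.det := by simp [hX]
  have uY : IsUnit Y.det := by simp [hY]
  have uXi : IsUnit X⁻¹.det := by simp [hX]
  have uYi : IsUnit Y⁻¹.det := by simp [hY]
  have sX : SemiconjBy !![1, 0; 0, σ] Xᵀ X := by
    ext i j
    fin_cases i <;> fin_cases j <;> simp [Matrix.mul_apply, Fin.sum_univ_two, hX01, hX10, mul_comm]
  have sY : SemiconjBy !![1, 0; 0, σ] Yᵀ Y := by
    ext i j
    fin_cases i <;> fin_cases j <;>
      simp [Matrix.mul_apply, Fin.sum_univ_two, mul_comm, ← hYσ]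
  have inv : ∀ A B : Matrix (Fin 2) (Fin 2) ℝ, IsUnit A.det → IsUnit B.det →
      SemiconjBy !![1, 0; 0, σ] Aᵀ B → ∀ k : ℤ, SemiconjBy !![1, 0; 0, σ] (A ^ k)ᵀ (B ^ k) := by
    intro A B hA hB h k
    rw [Matrix.transpose_zpow]
    exact Matrix.SemiconjBy.zpow_right (by simpa using hA) hB h k
  have mul : ∀ A B C E : Matrix (Fin 2) (Fin 2) ℝ, SemiconjBy !![1, 0; 0, σ] Aᵀ C →
      SemiconjBy !![1, 0; 0, σ] Bᵀ E → SemiconjBy !![1, 0; 0, σ] (A * B)ᵀ (E * C) := by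
    intro A B C E h1 h2
    rw [Matrix.transpose_mul]
    exact h2.mul_right h1
  have sXi := inv X X uX uX sX (-1)
  have sYi := inv Y Y uY uY sY (-1)
  rw [Matrix.zpow_neg_one] at sXi sYi
  have umul : ∀ A B : Matrix (Fin 2) (Fin 2) ℝ, IsUnit A.det → IsUnit B.det →
      IsUnit (A * B).det := by
    intro A B hA hB
    rw [Matrix.det_mul]
    exact hA.mul hB
  have key := inv _ _
    (umul _ _ ((umul _ _ uX uYi).det_zpow m) ((umul _ _ uXi uY).det_zpow m))
    (umul _ _ ((umul _ _ uY uXi).det_zpow m) ((umul _ _ uYi uX).det_zpow m))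
    (mul _ _ _ _
      (inv _ _ (umul _ _ uX uYi) (umul _ _ uYi uX) (mul _ _ _ _ sX sYi) m)
      (inv _ _ (umul _ _ uXi uY) (umul _ _ uY uXi) (mul _ _ _ _ sXi sY) m)) n
  generalize ((X * Y⁻¹) ^ m * (X⁻¹ * Y) ^ m) ^ n = V at *
  generalize ((Y * X⁻¹) ^ m * (Y⁻¹ * X) ^ m) ^ n = W at *
  have k := fun i j => congrFun (congrFun key.eq i) j
  have k00 := k 0 0
  have k01 := k 0 1
  have k10 := k 1 0
  have k11 := k 1 1
  simp [Matrix.mul_apply, Fin.sum_univ_two] at k00 k01 k10 k11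
  have := hσ.ne'
  ext i j
  fin_cases i <;> fin_cases j <;> simp
  · exact k00.symm
  · rw [eq_div_iff this]
    exact k01.symm
  · rw [← k10, mul_comm]
  · rcases mul_comm σ (V 1 1) ▸ k11 with h
    first
      | exact (mul_right_cancel₀ this h).symm
      | grind
end

section
/- Let m be a nonzero integer and n an integer, and let s, t be real numbers with s > 0, t > 1 and s + 2 < t + 1/t < s + 2 + 4/(s·g_{m-1}(s)²). Let U = (X'Y'⁻¹)^m (X'⁻¹Y')^m and U_* = (Y'X'⁻¹)^m (Y'⁻¹X')^m, and assume the relation U^n · X' = Y' · U^n holds. Then the matrix M = U_*^n · U^n is diagonal (its (1,2)- and (2,1)-entries vanish) and its (1,1)-entry is a positive real number. -/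
open Matrix

theorem aux_semi {D X Y : Matrix (Fin 2) (Fin 2) ℝ} (hX : IsUnit X.det) (hY : IsUnit Y.det)
    (sX : SemiconjBy D X Xᵀ) (sY : SemiconjBy D Y Yᵀ) (m n : ℤ) :
    SemiconjBy D (((Y * X⁻¹) ^ m * (Y⁻¹ * X) ^ m) ^ n)
      ((((X * Y⁻¹) ^ m * (X⁻¹ * Y) ^ m) ^ n)ᵀ) := by
  have hXt : IsUnit (Xᵀ).det := by rwa [det_transpose]
  have hYt : IsUnit (Yᵀ).det := by rwa [det_transpose]
  have iX : SemiconjBy D X⁻¹ (Xᵀ)⁻¹ := by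
    have := Matrix.SemiconjBy.zpow_right hX hXt sX (-1)
    simpa [Matrix.zpow_neg_one] using this
  have iY : SemiconjBy D Y⁻¹ (Yᵀ)⁻¹ := by
    have := Matrix.SemiconjBy.zpow_right hY hYt sY (-1)
    simpa [Matrix.zpow_neg_one] using this
  have u : ∀ {A B : Matrix (Fin 2) (Fin 2) ℝ}, IsUnit A.det → IsUnit B.det →
      IsUnit (A * B).det := fun ha hb => by rw [det_mul]; exact ha.mul hb
  have v : ∀ {A : Matrix (Fin 2) (Fin 2) ℝ}, IsUnit A.det → IsUnit (A⁻¹).det :=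
    fun ha => Matrix.isUnit_nonsing_inv_det _ ha
  have w : ∀ {A : Matrix (Fin 2) (Fin 2) ℝ} (k : ℤ), IsUnit A.det → IsUnit (A ^ k).det :=
    fun k ha => ha.det_zpow k
  rw [transpose_zpow, transpose_mul, transpose_zpow, transpose_zpow, transpose_mul, transpose_mul,
    transpose_nonsing_inv, transpose_nonsing_inv]
  refine Matrix.SemiconjBy.zpow_right ?_ ?_ (SemiconjBy.mul_right ?_ ?_) n
  · exact u (w m (u hY (v hX))) (w m (u (v hY) hX))
  · exact u (w m (u hYt (v hXt))) (w m (u (v hYt) hXt))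
  · exact Matrix.SemiconjBy.zpow_right (u hY (v hX)) (u hYt (v hXt)) (sY.mul_right iX) m
  · exact Matrix.SemiconjBy.zpow_right (u (v hY) hX) (u (v hYt) hXt) (iY.mul_right sX) m

theorem aux_main {X Y V W : Matrix (Fin 2) (Fin 2) ℝ} {a b p q : ℝ} (ha : 0 < a) (hb : 0 < b)
    (hX : X = !![p, 0; 0, q]) (hpq : p ≠ q) (sY : SemiconjBy !![a, 0; 0, b] Y Yᵀ)
    (hV : SemiconjBy !![a, 0; 0, b] V Wᵀ) (hW : IsUnit W.det) (hrel : W * X = Y * W) :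
    (V * W) 0 1 = 0 ∧ (V * W) 1 0 = 0 ∧ 0 < (V * W) 0 0 := by
  set D : Matrix (Fin 2) (Fin 2) ℝ := !![a, 0; 0, b] with hD
  have e1 : D * (V * W) = Wᵀ * D * W := by rw [← Matrix.mul_assoc, hV.eq]
  have e2 : (D * (V * W)) * X = X * (D * (V * W)) := by
    have hXt : Xᵀ = X := by
      rw [hX]; ext i j; fin_cases i <;> fin_cases j <;> simp
    calc (D * (V * W)) * X = Wᵀ * D * (W * X) := by rw [e1, Matrix.mul_assoc]
      _ = Wᵀ * (D * Y) * W := by rw [hrel]; simp only [Matrix.mul_assoc]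
      _ = (Y * W)ᵀ * D * W := by rw [sY.eq, transpose_mul]; simp only [Matrix.mul_assoc]
      _ = X * (D * (V * W)) := by
        rw [← hrel, transpose_mul, hXt, e1]; simp only [Matrix.mul_assoc]
  generalize hM : V * W = M at *
  have h01 := congrFun (congrFun e2 0) 1
  have h10 := congrFun (congrFun e2 1) 0
  have h00 := congrFun (congrFun e1 0) 0
  have hdet : W 0 0 * W 1 1 - W 0 1 * W 1 0 ≠ 0 := by
    rw [← det_fin_two]; exact hW.ne_zero
  simp [hD, hX, Matrix.mul_apply, Matrix.vecMul, dotProduct, Fin.sum_univ_two, -mul_eq_mul_left_iff,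
    -mul_eq_mul_right_iff] at h01 h10 h00
  have hpq' : p - q ≠ 0 := sub_ne_zero.mpr hpq
  refine ⟨?_, ?_, ?_⟩
  · have : (a * (p - q)) * M 0 1 = 0 := by linarith
    exact (mul_eq_zero.mp this).resolve_left (mul_ne_zero ha.ne' hpq')
  · have : (b * (p - q)) * M 1 0 = 0 := by linarith
    exact (mul_eq_zero.mp this).resolve_left (mul_ne_zero hb.ne' hpq')
  · have : 0 < a * M 0 0 := by
      rw [h00]
      by_cases h : W 0 0 = 0
      · have h' : W 1 0 ≠ 0 := by
          intro h'; apply hdet; rw [h, h']; ring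
        have := mul_pos hb (pow_pos (abs_pos.mpr h') 2)
        rw [sq_abs] at this
        nlinarith [mul_nonneg ha.le (sq_nonneg (W 0 0))]
      · have := mul_pos ha (pow_pos (abs_pos.mpr h) 2)
        rw [sq_abs] at this
        nlinarith [mul_nonneg hb.le (sq_nonneg (W 1 0))]
    exact (mul_pos_iff_of_pos_left ha).mp this

/-- If the assignment `x ↦ X'`, `y ↦ Y'` satisfies the knot-group relation
`U^n X' = Y' U^n`, then the image `M = U_*^n U^n` of the longitude is a diagonal matrix
whose `(1,1)`-entry is positive. -/
theorem longitude_diagonal (m : ℤ) (hm : m ≠ 0) (n : ℤ) (s t : ℝ) (hs : 0 < s) (ht : 1 < t)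
    (h1 : s + 2 < t + 1 / t) (h2 : t + 1 / t < s + 2 + 4 / (s * gZ (m - 1) s ^ 2))
    (hrel : ((Xmat' t * (Ymat' s t)⁻¹) ^ m * ((Xmat' t)⁻¹ * Ymat' s t) ^ m) ^ n * Xmat' t =
      Ymat' s t * ((Xmat' t * (Ymat' s t)⁻¹) ^ m * ((Xmat' t)⁻¹ * Ymat' s t) ^ m) ^ n) :
    (((Ymat' s t * (Xmat' t)⁻¹) ^ m * ((Ymat' s t)⁻¹ * Xmat' t) ^ m) ^ n *
        ((Xmat' t * (Ymat' s t)⁻¹) ^ m * ((Xmat' t)⁻¹ * Ymat' s t) ^ m) ^ n) 0 1 = 0 ∧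
    (((Ymat' s t * (Xmat' t)⁻¹) ^ m * ((Ymat' s t)⁻¹ * Xmat' t) ^ m) ^ n *
        ((Xmat' t * (Ymat' s t)⁻¹) ^ m * ((Xmat' t)⁻¹ * Ymat' s t) ^ m) ^ n) 1 0 = 0 ∧
    0 < (((Ymat' s t * (Xmat' t)⁻¹) ^ m * ((Ymat' s t)⁻¹ * Xmat' t) ^ m) ^ n *
        ((Xmat' t * (Ymat' s t)⁻¹) ^ m * ((Xmat' t)⁻¹ * Ymat' s t) ^ m) ^ n) 0 0 := by
  have hr : 1 < √t := by rw [Real.lt_sqrt] <;> linarith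
  have hr0 : √t ≠ 0 := by positivity
  have hsq : t = √t ^ 2 := (Real.sq_sqrt (by linarith)).symm
  have hinv : 1 / √t < 1 := by rw [div_lt_one] <;> linarith
  have hd : 0 < √t - 1 / √t := by linarith
  have hdsq : (√t - 1 / √t) ^ 2 = t + 1 / t - 2 := by
    have : 1 / t = (1 / √t) ^ 2 := by rw [div_pow, ← hsq, one_pow]
    rw [this]; nth_rewrite 3 [hsq]; field_simp; ring
  have hXd : IsUnit (Xmat' t).det := by
    rw [Xmat', det_fin_two_of]; field_simp; simp
  have hYd : IsUnit (Ymat' s t).det := by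
    have : (Ymat' s t).det = 1 := by
      have hk : (t - s - 1) * (s + 1 - 1 / t) = s * (t + 1 / t - 2) + (t + 1 / t - 2) - s ^ 2 := by
        have : t ≠ 0 := by linarith
        field_simp; ring
      rw [← hdsq] at hk
      rw [Ymat', det_fin_two_of, div_mul_div_comm, hk]
      generalize √t - 1 / √t = d at hd
      field_simp
      ring
    rw [this]; exact isUnit_one
  have hb : 0 < 1 - s / (√t - 1 / √t) ^ 2 := by
    rw [sub_pos, div_lt_one (by positivity), hdsq]; linarith
  have sX : SemiconjBy !![s, 0; 0, 1 - s / (√t - 1 / √t) ^ 2] (Xmat' t) (Xmat' t)ᵀ := by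
    unfold SemiconjBy Xmat'
    ext i j
    fin_cases i <;> fin_cases j <;> simp [Matrix.mul_apply, Fin.sum_univ_two, mul_comm]
  have sY : SemiconjBy !![s, 0; 0, 1 - s / (√t - 1 / √t) ^ 2] (Ymat' s t) (Ymat' s t)ᵀ := by
    unfold SemiconjBy Ymat'
    ext i j
    fin_cases i <;> fin_cases j <;> simp [Matrix.mul_apply, Fin.sum_univ_two] <;> ring
  refine aux_main hs hb rfl (by linarith) sY (aux_semi hXd hYd sX sY m n) ?_ hrel
  have u : ∀ {A B : Matrix (Fin 2) (Fin 2) ℝ}, IsUnit A.det → IsUnit B.det →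
      IsUnit (A * B).det := fun ha hb => by rw [det_mul]; exact ha.mul hb
  have v : ∀ {A : Matrix (Fin 2) (Fin 2) ℝ}, IsUnit A.det → IsUnit (A⁻¹).det :=
    fun ha => Matrix.isUnit_nonsing_inv_det _ ha
  exact (u ((u hXd (v hYd)).det_zpow m) ((u (v hXd) hYd).det_zpow m)).det_zpow n
end

section
/- Let m be a nonzero integer and let t : ℝ → ℝ be any function such that for every s > 0 one has t(s) > 1 and s + 2 < t(s) + 1/t(s) < s + 2 + 4/(s·g_{m-1}(s)²). Define B(s) = (-f_m(s) + t(s)·f_{m-1}(s)) / (-f_{m-1}(s) + t(s)·f_m(s)). Then B(s)·t(s)^{2m} tends to 1 as s → ∞. -/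
open Filter Topology

lemma aux_f1 (s r : ℝ) (hr : 1 < r) (hs : s + 2 = r + r⁻¹) (n : ℕ) :
    r ^ (n + 1) * (r * fN n s - fN (n + 1) s) = r - 1 := by
  have h0 : r ≠ 0 := by positivity
  induction n with
  | zero =>
    have : s = r + r⁻¹ - 2 := by linarith
    simp only [fN, this]; field_simp; ring
  | succ n ih =>
    rw [← ih]; simp only [fN, hs]; field_simp; ring

lemma aux_f2 (s r : ℝ) (hr : 1 < r) (hs : s + 2 = r + r⁻¹) (n : ℕ) :
    r * fN (n + 1) s - fN n s = r ^ (n + 1) * (r - 1) := by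
  have h0 : r ≠ 0 := by positivity
  induction n with
  | zero =>
    have : s = r + r⁻¹ - 2 := by linarith
    simp only [fN, this]; field_simp; ring
  | succ n ih =>
    rw [pow_succ, mul_right_comm, ← ih]; simp only [fN, hs]; field_simp; ring

lemma aux_f3 (s r : ℝ) (hr : 1 < r) (hs : s + 2 = r + r⁻¹) (n : ℕ) :
    0 < fN n s ∧ fN n s ≤ r ^ n := by
  have h0 : 0 < r := by positivity
  induction n with
  | zero => simp [fN]
  | succ n ih =>
    have h1 := aux_f1 s r hr hs n
    have h2 := aux_f2 s r hr hs n
    have hp : 0 < r ^ (n + 1) := by positivity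
    have h3 : 0 < r ^ (n + 1) * (r - 1) := mul_pos hp (by linarith)
    have h4 : 0 < r * fN n s - fN (n + 1) s := by
      by_contra! h
      nlinarith
    refine ⟨?_, ?_⟩
    · by_contra! h
      have := mul_nonneg h0.le (neg_nonneg.2 h)
      linarith [ih.1]
    · rw [pow_succ]
      have := mul_le_mul_of_nonneg_left ih.2 h0.le
      linarith

lemma aux_g (s r : ℝ) (hr : 1 < r) (hs : s + 2 = r + r⁻¹) (n : ℕ) :
    r ^ (n + 1) * (gN (n + 1) s - r * gN n s) = 1 := by
  have h0 : r ≠ 0 := by positivity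
  induction n with
  | zero => simp only [gN, hs]; field_simp; ring
  | succ n ih => rw [← ih]; simp only [gN, hs]; field_simp; ring

lemma aux_g2 (s r : ℝ) (hr : 1 < r) (hs : s + 2 = r + r⁻¹) (n : ℕ) :
    r ^ n ≤ gN n s := by
  have h0 : 0 < r := by positivity
  induction n with
  | zero => simp [gN]
  | succ n ih =>
    have h1 := aux_g s r hr hs n
    have hp : 0 < r ^ (n + 1) := by positivity
    have h4 : 0 < gN (n + 1) s - r * gN n s := by
      by_contra! h
      nlinarith
    rw [pow_succ]
    nlinarith

lemma aux_r (s : ℝ) (hs : 0 < s) : ∃ r : ℝ, 1 + s ≤ r ∧ s + 2 = r + r⁻¹ := by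
  set q := √((s + 2) ^ 2 - 4) with hq
  have hq2 : q ^ 2 = (s + 2) ^ 2 - 4 := Real.sq_sqrt (by nlinarith)
  have hqs : s ≤ q := Real.le_sqrt_of_sq_le (by nlinarith)
  refine ⟨(s + 2 + q) / 2, by linarith, ?_⟩
  have : s + 2 + q ≠ 0 := by positivity
  field_simp
  nlinarith

lemma key (n : ℕ) (s t : ℝ) (hs : 2 ≤ s) (ht : 1 < t) (h1 : s + 2 < t + 1 / t)
    (h2 : t + 1 / t < s + 2 + 4 / (s * gN n s ^ 2)) :
    (1 + 32 / s)⁻¹ ≤ (-fN (n + 1) s + t * fN n s) / (-fN n s + t * fN (n + 1) s) *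
        t ^ (2 * (n + 1)) ∧
    (-fN (n + 1) s + t * fN n s) / (-fN n s + t * fN (n + 1) s) * t ^ (2 * (n + 1)) ≤
      (1 + 32 / s) * (1 + 32 / s) ^ (2 * (n + 1)) := by
  obtain ⟨r, hrs, hr⟩ := aux_r s (by linarith)
  have hr1 : 1 < r := by linarith
  have hr0 : 0 < r := by linarith
  have ht0 : 0 < t := by linarith
  have hs0 : 0 < s := by linarith
  have hf1 := aux_f1 s r hr1 hr n
  have hf2 := aux_f2 s r hr1 hr n
  obtain ⟨hp, hple⟩ := aux_f3 s r hr1 hr n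
  obtain ⟨hq, hqle⟩ := aux_f3 s r hr1 hr (n + 1)
  have hg := aux_g2 s r hr1 hr n
  set p := fN n s
  set q := fN (n + 1) s
  have hid : (t + 1 / t) - (s + 2) = (t - r) * (1 - 1 / (t * r)) := by
    rw [hr]; field_simp; ring
  have htr : 1 < t * r := by nlinarith
  have hpos : 0 < 1 - 1 / (t * r) := by
    rw [sub_pos, div_lt_one (by positivity)]; exact htr
  have hd : 0 < t - r := by
    by_contra! h
    nlinarith
  have htr3 : 3 ≤ t * r := by nlinarith
  have hhalf : 1 / 2 ≤ 1 - 1 / (t * r) := by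
    have : 1 / (t * r) ≤ 1 / 3 := one_div_le_one_div_of_le (by norm_num) htr3
    linarith
  have hsr : r / 4 ≤ s := by
    have : r⁻¹ > 0 := by positivity
    linarith
  have hX : 0 < r ^ n := by positivity
  have hden : r / 4 * (r ^ n) ^ 2 ≤ s * gN n s ^ 2 := by gcongr
  have hdle : (t - r) ≤ 32 / (r * (r ^ n) ^ 2) := by
    have e1 : 4 / (s * gN n s ^ 2) ≤ 4 / (r / 4 * (r ^ n) ^ 2) := by gcongr
    have e2 : 4 / (r / 4 * (r ^ n) ^ 2) = (32 / (r * (r ^ n) ^ 2)) / 2 := by field_simp; norm_num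
    nlinarith
  obtain ⟨d, hdt⟩ : ∃ d, d = t - r := ⟨_, rfl⟩
  rw [← hdt] at hd hdle
  have htd : t = r * (1 + d / r) := by field_simp; linarith
  have hr1s : 0 < r - 1 := by linarith
  have hX1 : 1 ≤ r ^ n := one_le_pow₀ hr1.le
  have hdX : d * (r * (r ^ n) ^ 2) ≤ 32 := by
    rwa [le_div_iff₀ (by positivity)] at hdle
  have hd32 : d ≤ 32 := by
    have : 1 ≤ r * (r ^ n) ^ 2 := by nlinarith [one_le_pow₀ (n := 2) hX1]
    nlinarith
  have hA : d * p * r ^ (n + 1) / (r - 1) ≤ 32 / s := by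
    have : d * p * r ^ (n + 1) ≤ 32 := by
      calc d * p * r ^ (n + 1) ≤ d * r ^ n * r ^ (n + 1) := by gcongr
        _ = d * (r * (r ^ n) ^ 2) := by ring
        _ ≤ 32 := hdX
    gcongr
    linarith
  have hB : d * q / (r ^ (n + 1) * (r - 1)) ≤ 32 / s := by
    calc d * q / (r ^ (n + 1) * (r - 1)) ≤ d * r ^ (n + 1) / (r ^ (n + 1) * (r - 1)) := by gcongr
      _ = d / (r - 1) := by field_simp
      _ ≤ 32 / s := by gcongr; linarith
  have hC : d / r ≤ 32 / s := by gcongr; linarith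
  have hA0 : 0 ≤ d * p * r ^ (n + 1) / (r - 1) := by positivity
  have hB0 : 0 ≤ d * q / (r ^ (n + 1) * (r - 1)) := by positivity
  have hC0 : 0 ≤ d / r := by positivity
  have hN : -q + t * p = (r - 1) / r ^ (n + 1) * (1 + d * p * r ^ (n + 1) / (r - 1)) := by
    have : r * p - q = (r - 1) / r ^ (n + 1) := by
      rw [← hf1]; field_simp
    have h3 : -q + t * p = (r * p - q) + d * p := by rw [hdt]; ring
    rw [h3, this]; field_simp
  have hD : -p + t * q = r ^ (n + 1) * (r - 1) * (1 + d * q / (r ^ (n + 1) * (r - 1))) := by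
    have h3 : -p + t * q = (r * q - p) + d * q := by rw [hdt]; ring
    rw [h3, hf2]; field_simp
  have hfin : (-q + t * p) / (-p + t * q) * t ^ (2 * (n + 1)) =
      (1 + d * p * r ^ (n + 1) / (r - 1)) / (1 + d * q / (r ^ (n + 1) * (r - 1))) *
        (1 + d / r) ^ (2 * (n + 1)) := by
    rw [hN, hD, htd, mul_pow]
    generalize d * p * r ^ (n + 1) / (r - 1) = A at *
    generalize d * q / (r ^ (n + 1) * (r - 1)) = B at *
    generalize (1 + d / r) ^ (2 * (n + 1)) = C at *
    have : 1 + B ≠ 0 := by positivity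
    have : r ^ (n + 1) ≠ 0 := by positivity
    rw [two_mul, pow_add r (n + 1) (n + 1)]
    generalize r ^ (n + 1) = Y at *
    field_simp
  rw [hfin]
  generalize d * p * r ^ (n + 1) / (r - 1) = A at *
  generalize d * q / (r ^ (n + 1) * (r - 1)) = B at *
  generalize d / r = C at *
  constructor
  · calc (1 + 32 / s)⁻¹ ≤ (1 + B)⁻¹ := by gcongr
      _ = 1 / (1 + B) * 1 := by simp
      _ ≤ _ := by
        gcongr
        · linarith
        · exact one_le_pow₀ (by linarith)
  · calc _ ≤ (1 + A) / 1 * (1 + C) ^ (2 * (n + 1)) := by gcongr; linarith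
      _ ≤ _ := by rw [div_one]; gcongr

lemma key_lim (n : ℕ) (t : ℝ → ℝ)
    (ht : ∀ s : ℝ, 0 < s → 1 < t s ∧ s + 2 < t s + 1 / t s ∧
      t s + 1 / t s < s + 2 + 4 / (s * gN n s ^ 2)) :
    Tendsto (fun s =>
      (-fN (n + 1) s + t s * fN n s) / (-fN n s + t s * fN (n + 1) s) * t s ^ (2 * (n + 1)))
      atTop (𝓝 1) := by
  have h0 : Tendsto (fun s : ℝ => 1 + 32 / s) atTop (𝓝 1) := by
    simpa using (tendsto_const_nhds (x := (1 : ℝ))).add (tendsto_const_nhds.div_atTop tendsto_id)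
  have hl : Tendsto (fun s : ℝ => (1 + 32 / s)⁻¹) atTop (𝓝 1) := by
    simpa using h0.inv₀ one_ne_zero
  have hu : Tendsto (fun s : ℝ => (1 + 32 / s) * (1 + 32 / s) ^ (2 * (n + 1))) atTop (𝓝 1) := by
    simpa using h0.mul (h0.pow (2 * (n + 1)))
  refine tendsto_of_tendsto_of_tendsto_of_le_of_le' hl hu ?_ ?_ <;>
  · filter_upwards [eventually_ge_atTop 2] with s hs
    obtain ⟨a, b, c⟩ := ht s (by linarith)
    first
    | exact (key n s (t s) hs a b c).1
    | exact (key n s (t s) hs a b c).2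

/-- If `t(s) > 1` and `s + 2 < t(s) + 1/t(s) < s + 2 + 4/(s g_{m-1}(s)²)` for all `s > 0`,
then for `B(s) = (-f_m(s) + t(s) f_{m-1}(s))/(-f_{m-1}(s) + t(s) f_m(s))` one has
`B(s)·t(s)^{2m} → 1` as `s → ∞`. -/
theorem B_limit (m : ℤ) (hm : m ≠ 0) (t : ℝ → ℝ)
    (ht : ∀ s : ℝ, 0 < s → 1 < t s ∧ s + 2 < t s + 1 / t s ∧
      t s + 1 / t s < s + 2 + 4 / (s * gZ (m - 1) s ^ 2)) :
    Tendsto (fun s =>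
      (-fZ m s + t s * fZ (m - 1) s) / (-fZ (m - 1) s + t s * fZ m s) * t s ^ (2 * m))
      atTop (𝓝 1) := by
  rcases m with k | n
  · obtain _ | n := k
    · simp at hm
    have e : Int.ofNat (n + 1) - 1 = Int.ofNat n := by simp
    rw [e] at ht ⊢
    refine (key_lim n t ht).congr fun s => ?_
    have e2 : (2 * Int.ofNat (n + 1)) = ((2 * (n + 1) : ℕ) : ℤ) := by simp
    rw [e2, zpow_natCast]
    rfl
  · have e : Int.negSucc n - 1 = Int.negSucc (n + 1) := rfl
    rw [e] at ht ⊢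
    have := (key_lim n t (by simpa [gZ] using ht)).inv₀ one_ne_zero
    rw [inv_one] at this
    refine this.congr fun s => ?_
    have e2 : (2 * Int.negSucc n) = -((2 * (n + 1) : ℕ) : ℤ) := by
      rw [Int.negSucc_eq]; push_cast; ring
    rw [e2, zpow_neg, zpow_natCast, mul_inv, inv_div]
    rfl
end
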